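/- Let G be a finite group and let B be a commutative ring whose underlying additive group is torsion-free (i.e., n•b = 0 with n ≥ 1 implies b = 0). Then the ghost map φ : W_G(B) → ∏_{K ≤ G} B, whose K-th component is φ_K(x) = Σ_{[H]} |(G/H)^K| · x_H^{|H|/|K|}, the sum running over a set of representatives of the conjugacy classes of subgroups H of G, is injective. -/

import Mathlib

/-!
If `K` fixes the coset `gH`, then `K ≤ gHg⁻¹`. Hence, with subgroups ranked by their index, the
ghost equations at a set of representatives form a triangular system: the equation at `K` involves
only `x_K` and the `x_H` of smaller index. Its diagonal term is `|(G/K)^K| · x_K` with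
`|(G/K)^K| ≠ 0`, so torsion-freeness determines `x_K` by induction on the index of `K`.
-/

theorem eqOn_of_triangular_sum_eq {ι M α : Type*} {β : ι → Type*} [AddCommMonoid M]
    [IsRightCancelAdd M] [Preorder α] [WellFoundedLT α] {s : Finset ι} {rank : ι → α}
    {f : (i j : ι) → β j → M} {x y : (i : ι) → β i}
    (hdiag : ∀ i ∈ s, Function.Injective (f i i))
    (hoff : ∀ i ∈ s, ∀ j ∈ s, j ≠ i → ¬ rank j < rank i → f i j (x j) = f i j (y j))
    (hsum : ∀ i ∈ s, ∑ j ∈ s, f i j (x j) = ∑ j ∈ s, f i j (y j)) :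
    ∀ i ∈ s, x i = y i := by
  classical
  intro i
  induction i using (InvImage.wf rank wellFounded_lt).induction with
  | _ i ih =>
  intro hi
  have hrest : ∑ j ∈ s.erase i, f i j (x j) = ∑ j ∈ s.erase i, f i j (y j) := by
    refine Finset.sum_congr rfl fun j hj => ?_
    obtain ⟨hji, hjs⟩ := Finset.mem_erase.1 hj
    by_cases hlt : rank j < rank i
    · rw [ih j hlt hjs]
    · exact hoff i hi j hjs hji hlt
  have htotal := hsum i hi
  rw [← Finset.add_sum_erase s _ hi, ← Finset.add_sum_erase s _ hi, hrest] at htotal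
  exact hdiag i hi (add_right_cancel htotal)

section FixedPoints

open MulAction

variable {G : Type*} [Group G] {H K : Subgroup G}

theorem mk_mem_fixedPoints_iff_le_map_conj {g : G} :
    (g : G ⧸ H) ∈ fixedPoints K (G ⧸ H) ↔ K ≤ H.map (MulAut.conj g).toMonoidHom := by
  have hstab : stabilizer G (g : G ⧸ H) = H.map (MulAut.conj g).toMonoidHom := by
    simpa only [Quotient.smul_coe, smul_eq_mul, mul_one, stabilizer_quotient] using
      stabilizer_smul_eq_stabilizer_map_conj g ((1 : G) : G ⧸ H)
  rw [← hstab]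
  exact ⟨fun hfix k hk => hfix ⟨k, hk⟩, fun hle k => hle k.2⟩

theorem fixedPoints_quotient_self_nonempty : (fixedPoints K (G ⧸ K)).Nonempty :=
  ⟨((1 : G) : G ⧸ K), mk_mem_fixedPoints_iff_le_map_conj.2 fun k hk => ⟨k, hk, by simp⟩⟩

theorem index_lt_index_of_fixedPoints_nonempty [K.FiniteIndex]
    (hfix : (fixedPoints K (G ⧸ H)).Nonempty)
    (hconj : ¬ ∃ g : G, H.map (MulAut.conj g).toMonoidHom = K) : H.index < K.index := by
  obtain ⟨q, hq⟩ := hfix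
  obtain ⟨g, rfl⟩ := QuotientGroup.mk_surjective q
  have hle : K ≤ H.map (MulAut.conj g).toMonoidHom := mk_mem_fixedPoints_iff_le_map_conj.1 hq
  have hlt : K < H.map (MulAut.conj g).toMonoidHom := hle.lt_of_ne fun heq => hconj ⟨g, heq.symm⟩
  calc H.index = (H.map (MulAut.conj g).toMonoidHom).index :=
        (Subgroup.index_map_equiv H (MulAut.conj g)).symm
    _ < K.index := Subgroup.index_strictAnti hlt

end FixedPoints

section BurnsideWitt

variable {G : Type*} [Group G] {B : Type*}

/-- `R` contains exactly one member of each conjugacy class of subgroups of `G`. -/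
def IsConjTransversal (R : Finset (Subgroup G)) : Prop :=
  ∀ H : Subgroup G, ∃! H' : Subgroup G,
    H' ∈ R ∧ ∃ g : G, H.map (MulAut.conj g).toMonoidHom = H'

variable (G B) in
/-- The underlying set of the Burnside–Witt ring `W_G(B)`: the families indexed by the subgroups
of `G` that are constant on conjugacy classes. -/
def burnsideWitt : Set (Subgroup G → B) :=
  {x | ∀ (g : G) (H : Subgroup G), x (H.map (MulAut.conj g).toMonoidHom) = x H}

/-- The ghost map `φ_K(x) = ∑_{[H]} |(G/H)^K| · x_H^{|H|/|K|}`, with `[H]` running over the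
representatives in `R`. It is defined on all families, not only on those in `W_G(B)`. The
truncated division is harmless: for finite `G`, if `|K|` does not divide `|H|` then
`|(G/H)^K| = 0`. -/
noncomputable def ghostMap [Semiring B] (R : Finset (Subgroup G)) (x : Subgroup G → B)
    (K : Subgroup G) : B :=
  ∑ H ∈ R, (Nat.card (MulAction.fixedPoints K (G ⧸ H)) : B) * x H ^ (Nat.card H / Nat.card K)

namespace IsConjTransversal

variable {R : Finset (Subgroup G)}

theorem eq_of_map_conj_eq (hR : IsConjTransversal R) {H K : Subgroup G} (hH : H ∈ R) (hK : K ∈ R)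
    (hconj : ∃ g : G, H.map (MulAut.conj g).toMonoidHom = K) : H = K :=
  (hR H).unique ⟨hH, 1, by ext; simp⟩ ⟨hK, hconj⟩

theorem eq_of_eqOn (hR : IsConjTransversal R) {x y : Subgroup G → B} (hx : x ∈ burnsideWitt G B)
    (hy : y ∈ burnsideWitt G B) (hxy : ∀ H ∈ R, x H = y H) : x = y := by
  funext H
  obtain ⟨_, ⟨hmem, g, rfl⟩, -⟩ := hR H
  rw [← hx g H, ← hy g H, hxy _ hmem]

end IsConjTransversal

theorem ghostMap_diagonal_injective [Finite G] [Semiring B] [IsAddTorsionFree B]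
    (K : Subgroup G) :
    Function.Injective fun b : B =>
      (Nat.card (MulAction.fixedPoints K (G ⧸ K)) : B) * b ^ (Nat.card K / Nat.card K) := by
  have : Nonempty (MulAction.fixedPoints K (G ⧸ K)) :=
    fixedPoints_quotient_self_nonempty.to_subtype
  simpa only [Nat.div_self Nat.card_pos, pow_one, nsmul_eq_mul] using
    nsmul_right_injective (M := B) (Nat.card_pos (α := MulAction.fixedPoints K (G ⧸ K))).ne'

end BurnsideWitt

theorem stmt6_general (G : Type*) [Group G] [Finite G] (B : Type*) [Semiring B]
    [IsRightCancelAdd B] [IsAddTorsionFree B] (R : Finset (Subgroup G))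
    (hR : IsConjTransversal R) : Set.InjOn (ghostMap R) (burnsideWitt G B) := by
  intro x hx y hy hxy
  refine hR.eq_of_eqOn hx hy <| eqOn_of_triangular_sum_eq (rank := Subgroup.index)
    (f := fun K H b =>
      (Nat.card (MulAction.fixedPoints K (G ⧸ H)) : B) * b ^ (Nat.card H / Nat.card K))
    (fun K _ => ghostMap_diagonal_injective K) ?_ (fun K _ => congrFun hxy K)
  intro K hK H hH hHK hindex
  have hempty : MulAction.fixedPoints K (G ⧸ H) = ∅ := by
    by_contra hne
    exact hindex <| index_lt_index_of_fixedPoints_nonempty (Set.nonempty_iff_ne_empty.2 hne)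
      fun hconj => hHK (hR.eq_of_map_conj_eq hH hK hconj)
  simp [hempty]

/-- For a finite group `G` and a commutative ring `B` whose additive group
is torsion-free, the ghost map `W_G(B) → ∏_{K ≤ G} B`, whose `K`-th component is
`x ↦ Σ_{[H]} |(G/H)^K| · x_H^{|H|/|K|}` (the sum over a set `R` of representatives of the
conjugacy classes of subgroups of `G`), is injective on the set of conjugation-invariant
families `x = (x_H)_H`. -/
theorem stmt6 (G : Type*) [Group G] [Finite G] (B : Type*) [CommRing B]
    (htf : ∀ n : ℕ, n ≠ 0 → ∀ b : B, n • b = 0 → b = 0)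
    (R : Finset (Subgroup G))
    (hR : ∀ H : Subgroup G, ∃! H' : Subgroup G,
      H' ∈ R ∧ ∃ g : G, Subgroup.map (MulAut.conj g).toMonoidHom H = H') :
    Function.Injective
      (fun (x : {x : Subgroup G → B //
          ∀ (g : G) (H : Subgroup G), x (Subgroup.map (MulAut.conj g).toMonoidHom H) = x H})
        (K : Subgroup G) =>
        ∑ H ∈ R, (Nat.card (MulAction.fixedPoints K (G ⧸ H)) : B) *
          x.1 H ^ (Nat.card H / Nat.card K)) := by
  have : IsAddTorsionFree B :=
    ⟨fun n hn => (injective_iff_map_eq_zero (nsmulAddMonoidHom (α := B) n)).2 (htf n hn)⟩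
  exact (stmt6_general G B R hR).injective
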